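/- Let W ⊂ ℝ^d be a measurable set of finite Lebesgue measure, let y : W → ℝ^p be a bounded measurable map, and let θ > 0. If the p×p matrix ∫_W y(s) y(s)^⊤ ds is positive definite, then the function G : ℝ^p → ℝ defined by G(ψ) = θ ∫_W exp(⟨ψ, y(s)⟩) ds is strictly convex on ℝ^p; consequently, for any finite set x ⊂ W and c ∈ ℝ, the Poisson log-likelihood ℓ(ψ) = Σ_{s∈x} (c + ⟨ψ, y(s)⟩) − G(ψ) is strictly concave and has at most one maximizer. -/

import Mathlib

open MeasureTheory
open scoped RealInnerProductSpace

/-- If `∫_W y(s) y(s)ᵀ ds` is positive definite, then `G(ψ) = θ ∫_W exp(⟨ψ, y(s)⟩) ds` is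
strictly convex; consequently the Poisson log-likelihood
`ℓ(ψ) = Σ_{s∈x} (c + ⟨ψ, y(s)⟩) − G(ψ)` is strictly concave and has at most one maximizer. -/
theorem poissonLogLik_strictConcave {d p : ℕ} (W : Set (Fin d → ℝ))
    (hW : MeasurableSet W) (hWfin : volume W < ⊤)
    (y : (Fin d → ℝ) → EuclideanSpace ℝ (Fin p)) (hy : Measurable y)
    (M : ℝ) (hM : ∀ s ∈ W, ‖y s‖ ≤ M)
    (θ : ℝ) (hθ : 0 < θ)
    (hpd : (Matrix.of fun i j => ∫ s in W, y s i * y s j : Matrix (Fin p) (Fin p) ℝ).PosDef) :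
    StrictConvexOn ℝ Set.univ
        (fun ψ : EuclideanSpace ℝ (Fin p) => θ * ∫ s in W, Real.exp (⟪ψ, y s⟫)) ∧
      ∀ (x : Finset (Fin d → ℝ)), ↑x ⊆ W → ∀ c : ℝ,
        StrictConcaveOn ℝ Set.univ
            (fun ψ : EuclideanSpace ℝ (Fin p) =>
              (∑ s ∈ x, (c + ⟪ψ, y s⟫)) - θ * ∫ s in W, Real.exp (⟪ψ, y s⟫)) ∧
          ∀ ψ₁ ψ₂ : EuclideanSpace ℝ (Fin p),
            IsMaxOn (fun ψ : EuclideanSpace ℝ (Fin p) =>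
                (∑ s ∈ x, (c + ⟪ψ, y s⟫)) - θ * ∫ s in W, Real.exp (⟪ψ, y s⟫)) Set.univ ψ₁ →
            IsMaxOn (fun ψ : EuclideanSpace ℝ (Fin p) =>
                (∑ s ∈ x, (c + ⟪ψ, y s⟫)) - θ * ∫ s in W, Real.exp (⟪ψ, y s⟫)) Set.univ ψ₂ →
            ψ₁ = ψ₂ := by
  have hb : ∀ f : (Fin d → ℝ) → ℝ, Measurable f → (C : ℝ) → (∀ s ∈ W, |f s| ≤ C) →
      Integrable f (volume.restrict W) := by
    intro f hf C hC
    have : IsFiniteMeasure (volume.restrict W) := ⟨by simpa using hWfin⟩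
    refine Integrable.of_bound hf.aestronglyMeasurable C ?_
    filter_upwards [ae_restrict_mem hW] with s hs
    simpa using hC s hs
  have hyi : ∀ i, Measurable fun s => y s i := fun i => by fun_prop
  have hin : ∀ ψ : EuclideanSpace ℝ (Fin p), Measurable fun s => ⟪ψ, y s⟫ := fun ψ => by fun_prop
  have hexp : ∀ ψ : EuclideanSpace ℝ (Fin p),
      Integrable (fun s => Real.exp (⟪ψ, y s⟫)) (volume.restrict W) := by
    intro ψ
    refine hb _ (hin ψ).exp (Real.exp (‖ψ‖ * M)) ?_
    intro s hs
    rw [abs_of_pos (Real.exp_pos _), Real.exp_le_exp]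
    exact (real_inner_le_norm _ _).trans (mul_le_mul_of_nonneg_left (hM s hs) (norm_nonneg _))
  have hyy : ∀ i j, Integrable (fun s => y s i * y s j) (volume.restrict W) := by
    intro i j
    refine hb _ ((hyi i).mul (hyi j)) (M * M) ?_
    intro s hs
    have h1 : ∀ k, |y s k| ≤ M := fun k =>
      (by simpa using PiLp.norm_apply_le (y s) k : |y s k| ≤ ‖y s‖).trans (hM s hs)
    rw [abs_mul]
    exact mul_le_mul (h1 i) (h1 j) (abs_nonneg _) ((abs_nonneg _).trans (h1 i))
  have key : ∀ w : EuclideanSpace ℝ (Fin p), w ≠ 0 →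
      ¬ (∀ᵐ s ∂(volume.restrict W), ⟪w, y s⟫ = 0) := by
    intro w hw h0
    have hw' : (fun i => w i) ≠ 0 := by
      intro h
      apply hw
      ext i
      exact congrFun h i
    have hpos := hpd.dotProduct_mulVec_pos hw'
    have hz : (Matrix.of fun i j => ∫ s in W, y s i * y s j : Matrix (Fin p) (Fin p) ℝ).mulVec
        (fun i => w i) = 0 := by
      ext i
      simp only [Matrix.mulVec, dotProduct, Matrix.of_apply, Pi.zero_apply]
      simp_rw [← integral_mul_const]
      rw [← integral_finsetSum _ (fun j _ => (hyy i j).mul_const _)]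
      apply integral_eq_zero_of_ae
      filter_upwards [h0] with s hs
      rw [PiLp.inner_apply] at hs
      simp only [RCLike.inner_apply, conj_trivial] at hs
      simp only [mul_assoc, Pi.zero_apply]
      rw [← Finset.mul_sum, hs, mul_zero]
    rw [hz] at hpos
    simp at hpos
  have hG : StrictConvexOn ℝ Set.univ
      (fun ψ : EuclideanSpace ℝ (Fin p) => θ * ∫ s in W, Real.exp (⟪ψ, y s⟫)) := by
    refine ⟨convex_univ, ?_⟩
    intro u _ v _ huv a b ha hb' hab
    have hI : Integrable (fun s => a * Real.exp (⟪u, y s⟫) + b * Real.exp (⟪v, y s⟫))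
        (volume.restrict W) := ((hexp u).const_mul a).add ((hexp v).const_mul b)
    have hle : ∀ s, Real.exp (⟪a • u + b • v, y s⟫) ≤
        a * Real.exp (⟪u, y s⟫) + b * Real.exp (⟪v, y s⟫) := by
      intro s
      have := convexOn_exp.2 (Set.mem_univ (⟪u, y s⟫)) (Set.mem_univ (⟪v, y s⟫)) ha.le hb'.le hab
      simpa [inner_add_left, real_inner_smul_left] using this
    have hlt : ∫ s in W, Real.exp (⟪a • u + b • v, y s⟫) <
        ∫ s in W, (a * Real.exp (⟪u, y s⟫) + b * Real.exp (⟪v, y s⟫)) := by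
      refine lt_of_le_of_ne (integral_mono (hexp _) hI hle) ?_
      intro heq
      rw [integral_eq_iff_of_ae_le (hexp _) hI (Filter.Eventually.of_forall hle)] at heq
      apply key (u - v) (sub_ne_zero.2 huv)
      filter_upwards [heq] with s hs
      by_contra hne
      have hne' : ⟪u, y s⟫ ≠ ⟪v, y s⟫ := by
        intro h
        apply hne
        rw [inner_sub_left, h, sub_self]
      have := strictConvexOn_exp.2 (Set.mem_univ _) (Set.mem_univ _) hne' ha hb' hab
      simp only [inner_add_left, real_inner_smul_left] at hs
      simp only [smul_eq_mul] at this
      exact absurd hs this.ne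
    rw [integral_add ((hexp u).const_mul a) ((hexp v).const_mul b), integral_const_mul,
      integral_const_mul] at hlt
    have := mul_lt_mul_of_pos_left hlt hθ
    simp only [smul_eq_mul]
    linarith
  refine ⟨hG, fun x _ c => ?_⟩
  have hC : StrictConcaveOn ℝ Set.univ
      (fun ψ : EuclideanSpace ℝ (Fin p) =>
        (∑ s ∈ x, (c + ⟪ψ, y s⟫)) - θ * ∫ s in W, Real.exp (⟪ψ, y s⟫)) := by
    refine ConcaveOn.sub_strictConvexOn ⟨convex_univ, ?_⟩ hG
    intro u _ v _ a b _ _ hab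
    apply le_of_eq
    simp only [smul_eq_mul, Finset.mul_sum, ← Finset.sum_add_distrib]
    refine Finset.sum_congr rfl fun s _ => ?_
    rw [inner_add_left, real_inner_smul_left, real_inner_smul_left]
    linear_combination c * hab
  exact ⟨hC, fun u v hu hv => hC.eq_of_isMaxOn hu hv (Set.mem_univ _) (Set.mem_univ _)⟩
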